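/- arXiv:1106.1354 — 5 statements merged into one kernel-verified Lean document; each statement's English description precedes it below -/
import Mathlib

section
/- Let q₂ be a quadratic form on ℝ³, let q₁, l₁ be linear forms on ℝ³, and let q₀, l₀, c₀ ∈ ℝ. Define G(ū,u₄) = q₂(ū) + q₁(ū)·u₄ + q₀u₄² + l₁(ū) + l₀u₄ + c₀ on ℝ⁴. Then for all x ∈ ℝ³ one has the identity (|x|²+1)² · G(σ⁻¹(x)) = (q₀+l₀+c₀)(|x|²)² + 2|x|²·(q₁(x)+l₁(x)) + 4q₂(x) + 2(c₀−q₀)|x|² + 2(l₁(x)−q₁(x)) + (q₀−l₀+c₀). In particular the stereographic projection of Σ ∩ {G=0} ∖ {Z} satisfies an equation of Darboux cyclide form; moreover the coefficients λ = q₀+l₀+c₀, the linear part, and the degree-≤2 part of the right-hand side all vanish if and only if G is a real scalar multiple of the polynomial u₁²+u₂²+u₃²+u₄²−1 defining Σ. -/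
/-- The inverse stereographic projection `σ⁻¹ : ℝ³ → ℝ⁴`. -/
noncomputable def invStereo (x : Fin 3 → ℝ) : Fin 4 → ℝ :=
  ![2 * x 0 / (x 0 ^ 2 + x 1 ^ 2 + x 2 ^ 2 + 1),
    2 * x 1 / (x 0 ^ 2 + x 1 ^ 2 + x 2 ^ 2 + 1),
    2 * x 2 / (x 0 ^ 2 + x 1 ^ 2 + x 2 ^ 2 + 1),
    (x 0 ^ 2 + x 1 ^ 2 + x 2 ^ 2 - 1) / (x 0 ^ 2 + x 1 ^ 2 + x 2 ^ 2 + 1)]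

/-- the stereographic projection of the intersection of `Σ` with any quadric
`G = 0` of `ℝ⁴` satisfies an equation of Darboux cyclide form; the cyclide equation is
trivial (all coefficients vanish) iff `G` is a scalar multiple of the polynomial defining `Σ`.
Here `q₂` is a quadratic form on `ℝ³` (given by a matrix `M`) and `q₁`, `l₁` are linear forms
(given by coefficient vectors). -/
theorem quadric_section_is_darboux_cyclide
    (M : Matrix (Fin 3) (Fin 3) ℝ) (q2 : (Fin 3 → ℝ) → ℝ)
    (hq2 : ∀ y : Fin 3 → ℝ, q2 y = ∑ i : Fin 3, ∑ j : Fin 3, M i j * y i * y j)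
    (q1 l1 : Fin 3 → ℝ) (q0 l0 c0 : ℝ)
    (G : (Fin 4 → ℝ) → ℝ)
    (hG : ∀ u : Fin 4 → ℝ,
      G u = q2 ![u 0, u 1, u 2]
        + (q1 0 * u 0 + q1 1 * u 1 + q1 2 * u 2) * u 3
        + q0 * u 3 ^ 2
        + (l1 0 * u 0 + l1 1 * u 1 + l1 2 * u 2)
        + l0 * u 3 + c0) :
    (∀ x : Fin 3 → ℝ,
      (x 0 ^ 2 + x 1 ^ 2 + x 2 ^ 2 + 1) ^ 2 * G (invStereo x)
        = (q0 + l0 + c0) * (x 0 ^ 2 + x 1 ^ 2 + x 2 ^ 2) ^ 2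
          + 2 * (x 0 ^ 2 + x 1 ^ 2 + x 2 ^ 2)
              * ((q1 0 * x 0 + q1 1 * x 1 + q1 2 * x 2)
                  + (l1 0 * x 0 + l1 1 * x 1 + l1 2 * x 2))
          + 4 * q2 x
          + 2 * (c0 - q0) * (x 0 ^ 2 + x 1 ^ 2 + x 2 ^ 2)
          + 2 * ((l1 0 * x 0 + l1 1 * x 1 + l1 2 * x 2)
                  - (q1 0 * x 0 + q1 1 * x 1 + q1 2 * x 2))
          + (q0 - l0 + c0)) ∧
    ((q0 + l0 + c0 = 0 ∧
      (∀ x : Fin 3 → ℝ,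
        2 * ((q1 0 * x 0 + q1 1 * x 1 + q1 2 * x 2)
              + (l1 0 * x 0 + l1 1 * x 1 + l1 2 * x 2)) = 0) ∧
      (∀ x : Fin 3 → ℝ,
        4 * q2 x + 2 * (c0 - q0) * (x 0 ^ 2 + x 1 ^ 2 + x 2 ^ 2)
          + 2 * ((l1 0 * x 0 + l1 1 * x 1 + l1 2 * x 2)
                  - (q1 0 * x 0 + q1 1 * x 1 + q1 2 * x 2))
          + (q0 - l0 + c0) = 0))
      ↔ ∃ μ : ℝ, ∀ u : Fin 4 → ℝ,
          G u = μ * (u 0 ^ 2 + u 1 ^ 2 + u 2 ^ 2 + u 3 ^ 2 - 1)) := by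
  have hneg : ∀ a b c : ℝ, q2 ![-a, -b, -c] = q2 ![a, b, c] := by
    intro a b c
    rw [hq2, hq2]
    simp [Fin.sum_univ_three]
  have hz : q2 ![0, 0, 0] = 0 := by
    rw [hq2]
    simp [Fin.sum_univ_three]
  have hvec : ∀ x : Fin 3 → ℝ, ![x 0, x 1, x 2] = x := by
    intro x
    ext i
    fin_cases i <;> rfl
  refine ⟨?_, ?_, ?_⟩
  · intro x
    have hpos : x 0 ^ 2 + x 1 ^ 2 + x 2 ^ 2 + 1 ≠ 0 := by positivity
    rw [hG, hq2, hq2]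
    simp only [invStereo, Fin.sum_univ_three, Matrix.cons_val]
    generalize hd : x 0 ^ 2 + x 1 ^ 2 + x 2 ^ 2 + 1 = d at *
    have hs : x 0 ^ 2 + x 1 ^ 2 + x 2 ^ 2 = d - 1 := by linarith
    rw [hs]
    field_simp
    ring
  · rintro ⟨h1, h2, h3⟩
    refine ⟨q0, fun u => ?_⟩
    have a0 := h3 ![0, 0, 0]
    have a1 := h3 ![u 0, u 1, u 2]
    have a2 := h3 ![-u 0, -u 1, -u 2]
    have a3 := h2 ![u 0, u 1, u 2]
    rw [hneg] at a2
    rw [hz] at a0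
    simp only [Matrix.cons_val] at a0 a1 a2 a3
    have e1 : l0 = 0 := by linarith
    have e2 : c0 = -q0 := by linarith
    subst e1 e2
    have e3 : q1 0 * u 0 + q1 1 * u 1 + q1 2 * u 2 = 0 := by linarith
    have e4 : l1 0 * u 0 + l1 1 * u 1 + l1 2 * u 2 = 0 := by linarith
    rw [hG, e3, e4]
    rw [e3, e4] at a1
    linarith
  · rintro ⟨μ, h⟩
    have b0 := h ![0, 0, 0, 0]
    have b1 := h ![0, 0, 0, 1]
    have b2 := h ![0, 0, 0, -1]
    rw [hG] at b0 b1 b2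
    simp only [Matrix.cons_val, hz] at b0 b1 b2
    have key : ∀ x : Fin 3 → ℝ, q1 0 * x 0 + q1 1 * x 1 + q1 2 * x 2 = 0 ∧
        l1 0 * x 0 + l1 1 * x 1 + l1 2 * x 2 = 0 ∧
        q2 x = μ * (x 0 ^ 2 + x 1 ^ 2 + x 2 ^ 2) := by
      intro x
      have c1 := h ![x 0, x 1, x 2, 0]
      have c2 := h ![-x 0, -x 1, -x 2, 0]
      have c3 := h ![x 0, x 1, x 2, 1]
      rw [hG] at c1 c2 c3
      simp only [Matrix.cons_val, hneg, hvec] at c1 c2 c3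
      refine ⟨?_, ?_, ?_⟩ <;> linarith
    refine ⟨by linarith, fun x => ?_, fun x => ?_⟩
    · obtain ⟨k1, k2, k3⟩ := key x
      rw [k1, k2]; ring
    · obtain ⟨k1, k2, k3⟩ := key x
      have e1 : q0 = μ := by linarith
      have e2 : c0 = -μ := by linarith
      have e3 : l0 = 0 := by linarith
      rw [k1, k2, k3, e1, e2, e3]; ring
end

section
/- Let A be a real symmetric 5×5 matrix, J = diag(1,1,1,1,−1), and suppose the set of real roots of det(A − tJ) = 0 is nonempty. If t₀ is the smallest real root, then the symmetric matrix A − t₀J has at most one negative eigenvalue (counted with multiplicity); if t₁ is the largest real root, then A − t₁J has at most one positive eigenvalue (counted with multiplicity). In particular, neither A − t₀J nor A − t₁J can have exactly two positive and two negative eigenvalues. -/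
open Matrix

/-- The matrix `J = diag(1,1,1,1,−1)`. -/
noncomputable def Jmat : Matrix (Fin 5) (Fin 5) ℝ :=
  Matrix.diagonal ![1, 1, 1, 1, -1]

lemma Jmat_isHermitian : Jmat.IsHermitian := Matrix.isHermitian_diagonal _

lemma smul_Jmat_isHermitian (t : ℝ) : (t • Jmat).IsHermitian := by
  rw [Matrix.IsHermitian, Matrix.conjTranspose_smul, star_trivial]
  rw [Jmat_isHermitian]

/-- The matrices `A − tJ` of the pencil are Hermitian (i.e. real symmetric). -/
noncomputable def pencilHerm (A : Matrix (Fin 5) (Fin 5) ℝ) (hA : A.IsHermitian) (t : ℝ) :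
    (A - t • Jmat).IsHermitian :=
  hA.sub (smul_Jmat_isHermitian t)

/-- The number of positive eigenvalues (with multiplicity) of a real symmetric matrix. -/
noncomputable def posCount {M : Matrix (Fin 5) (Fin 5) ℝ} (hM : M.IsHermitian) : ℕ :=
  (Finset.univ.filter fun i => 0 < hM.eigenvalues i).card

/-- The number of negative eigenvalues (with multiplicity) of a real symmetric matrix. -/
noncomputable def negCount {M : Matrix (Fin 5) (Fin 5) ℝ} (hM : M.IsHermitian) : ℕ :=
  (Finset.univ.filter fun i => hM.eigenvalues i < 0).card

lemma finrank_ge (P : Matrix (Fin 5) (Fin 5) ℝ) (s : Finset (Fin 5)) :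
    ∃ W : Submodule ℝ (Fin 5 → ℝ), s.card ≤ Module.finrank ℝ W ∧
      ∀ x ∈ W, ∀ i, i ∉ s → (P *ᵥ x) i = 0 := by
  let L : (Fin 5 → ℝ) →ₗ[ℝ] ((sᶜ : Finset (Fin 5)) → ℝ) :=
    (LinearMap.funLeft ℝ ℝ (fun i : (sᶜ : Finset (Fin 5)) => (i : Fin 5))) ∘ₗ P.mulVecLin
  refine ⟨LinearMap.ker L, ?_, ?_⟩
  · have h1 := LinearMap.finrank_range_add_finrank_ker L
    have h2 := Submodule.finrank_le (LinearMap.range L)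
    have h3 : Module.finrank ℝ ((sᶜ : Finset (Fin 5)) → ℝ) = (sᶜ : Finset (Fin 5)).card := by
      rw [Module.finrank_fintype_fun_eq_card, Fintype.card_coe]
    have h4 := Finset.card_add_card_compl s
    simp only [Module.finrank_fin_fun, Fintype.card_fin] at h1 h4
    omega
  · intro x hx i hi
    have := congrFun (LinearMap.mem_ker.mp hx) ⟨i, by simpa using hi⟩
    simpa [L, LinearMap.funLeft] using this

lemma unif (s : Finset (Fin 5)) (f : Fin 5 → ℝ) (h : ∀ i ∈ s, 0 < f i) :
    ∃ c > 0, ∀ i ∈ s, c ≤ f i := by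
  rcases s.eq_empty_or_nonempty with rfl | hs
  · exact ⟨1, one_pos, by simp⟩
  · obtain ⟨i, hi, hm⟩ := s.exists_min_image f hs
    exact ⟨f i, h i hi, hm⟩

lemma spec {M : Matrix (Fin 5) (Fin 5) ℝ} (hM : M.IsHermitian) :
    ∃ P : Matrix (Fin 5) (Fin 5) ℝ, ∀ x : Fin 5 → ℝ,
      x ⬝ᵥ M *ᵥ x = ∑ i, hM.eigenvalues i * ((P *ᵥ x) i) ^ 2 ∧
      x ⬝ᵥ x = ∑ i, ((P *ᵥ x) i) ^ 2 := by
  set U : Matrix (Fin 5) (Fin 5) ℝ := (hM.eigenvectorUnitary : Matrix (Fin 5) (Fin 5) ℝ) with hU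
  have hUU : U * Uᵀ = 1 := by
    have := Unitary.coe_mul_star_self hM.eigenvectorUnitary
    simpa [star_eq_conjTranspose] using this
  have hs : M = U * diagonal hM.eigenvalues * Uᵀ := by
    have := hM.spectral_theorem
    rw [Unitary.conjStarAlgAut_apply] at this
    simpa [star_eq_conjTranspose, Function.comp_def] using this
  refine ⟨Uᵀ, fun x => ⟨?_, ?_⟩⟩
  · generalize hM.eigenvalues = l at *
    rw [hs, ← mulVec_mulVec, ← mulVec_mulVec, dotProduct_mulVec, ← mulVec_transpose]
    simp only [dotProduct, mulVec_diagonal]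
    exact Finset.sum_congr rfl fun i _ => by ring
  · have : x ⬝ᵥ x = x ⬝ᵥ (U * Uᵀ) *ᵥ x := by rw [hUU, one_mulVec]
    rw [this, ← mulVec_mulVec, dotProduct_mulVec, ← mulVec_transpose]
    simp only [dotProduct]
    exact Finset.sum_congr rfl fun i _ => by ring

/-- `k`-dimensional uniformly positive subspace. -/
def PosSub (k : ℕ) (M : Matrix (Fin 5) (Fin 5) ℝ) : Prop :=
  ∃ W : Submodule ℝ (Fin 5 → ℝ), k ≤ Module.finrank ℝ W ∧ ∃ c > 0, ∀ x ∈ W,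
    c * (x ⬝ᵥ x) ≤ x ⬝ᵥ M *ᵥ x

lemma posSub_of_pos {M : Matrix (Fin 5) (Fin 5) ℝ} (hM : M.IsHermitian) :
    PosSub (posCount hM) M := by
  obtain ⟨P, hP⟩ := spec hM
  obtain ⟨W, hW, hx⟩ := finrank_ge P (Finset.univ.filter fun i => 0 < hM.eigenvalues i)
  obtain ⟨c, hc, hcl⟩ := unif (Finset.univ.filter fun i => 0 < hM.eigenvalues i)
    hM.eigenvalues (by simp)
  refine ⟨W, hW, c, hc, fun x hxW => ?_⟩
  rw [(hP x).1, (hP x).2, Finset.mul_sum]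
  refine Finset.sum_le_sum fun i _ => ?_
  by_cases hi : i ∈ Finset.univ.filter fun i => 0 < hM.eigenvalues i
  · exact mul_le_mul_of_nonneg_right (hcl i hi) (sq_nonneg _)
  · simp [hx x hxW i hi]

lemma posSub_of_neg {M : Matrix (Fin 5) (Fin 5) ℝ} (hM : M.IsHermitian) :
    PosSub (negCount hM) (-M) := by
  obtain ⟨P, hP⟩ := spec hM
  obtain ⟨W, hW, hx⟩ := finrank_ge P (Finset.univ.filter fun i => hM.eigenvalues i < 0)
  obtain ⟨c, hc, hcl⟩ := unif (Finset.univ.filter fun i => hM.eigenvalues i < 0)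
    (fun i => - hM.eigenvalues i) (by simp)
  refine ⟨W, hW, c, hc, fun x hxW => ?_⟩
  rw [neg_mulVec, dotProduct_neg, (hP x).1, (hP x).2, Finset.mul_sum, ← Finset.sum_neg_distrib]
  refine Finset.sum_le_sum fun i _ => ?_
  by_cases hi : i ∈ Finset.univ.filter fun i => hM.eigenvalues i < 0
  · have := mul_le_mul_of_nonneg_right (hcl i hi) (sq_nonneg ((P *ᵥ x) i))
    linarith
  · simp [hx x hxW i hi]

lemma PosSub.mono {k l : ℕ} {M : Matrix (Fin 5) (Fin 5) ℝ} (h : PosSub l M) (hkl : k ≤ l) :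
    PosSub k M := by
  obtain ⟨W, hW, h⟩ := h
  exact ⟨W, hkl.trans hW, h⟩

lemma posSub_disj {M : Matrix (Fin 5) (Fin 5) ℝ} (h4 : PosSub 4 M) (h2 : PosSub 2 (-M)) :
    False := by
  obtain ⟨W, hW, c, hc, h⟩ := h4
  obtain ⟨V, hV, d, hd, h'⟩ := h2
  have h1 := Submodule.finrank_sup_add_finrank_inf_eq W V
  have h2 := Submodule.finrank_le (W ⊔ V)
  simp only [Module.finrank_fin_fun] at h2
  have h3 : 0 < Module.finrank ℝ (W ⊓ V : Submodule ℝ (Fin 5 → ℝ)) := by omega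
  have h5 : W ⊓ V ≠ ⊥ := by
    intro hb
    rw [hb] at h3
    simp at h3
  obtain ⟨x, hx, hx0⟩ := Submodule.exists_mem_ne_zero_of_ne_bot h5
  have e1 := h x hx.1
  have e2 := h' x hx.2
  rw [neg_mulVec, dotProduct_neg] at e2
  have hp : 0 < x ⬝ᵥ x := by
    have h0 : x ⬝ᵥ x ≠ 0 := fun h => hx0 (dotProduct_self_eq_zero.mp h)
    have h1 : 0 ≤ x ⬝ᵥ x := Finset.sum_nonneg fun i _ => mul_self_nonneg _
    exact lt_of_le_of_ne h1 h0.symm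
  nlinarith [mul_pos hc hp, mul_pos hd hp]

lemma J_eq (x : Fin 5 → ℝ) : x ⬝ᵥ Jmat *ᵥ x = x ⬝ᵥ x - 2 * x 4 ^ 2 := by
  simp [Jmat, dotProduct, mulVec_diagonal, Fin.sum_univ_five]
  ring

lemma J_bound (x : Fin 5 → ℝ) : |x ⬝ᵥ Jmat *ᵥ x| ≤ x ⬝ᵥ x := by
  rw [J_eq, abs_le]
  simp only [dotProduct, Fin.sum_univ_five]
  constructor <;> nlinarith [sq_nonneg (x 0), sq_nonneg (x 1), sq_nonneg (x 2), sq_nonneg (x 3),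
    sq_nonneg (x 4)]

lemma posSub_open (k : ℕ) (A B : Matrix (Fin 5) (Fin 5) ℝ)
    (hB : ∀ x : Fin 5 → ℝ, |x ⬝ᵥ B *ᵥ x| ≤ x ⬝ᵥ x) :
    IsOpen {t : ℝ | PosSub k (A - t • B)} := by
  rw [Metric.isOpen_iff]
  rintro t ⟨W, hW, c, hc, h⟩
  refine ⟨c / 2, by positivity, fun u hu => ⟨W, hW, c / 2, by positivity, fun x hx => ?_⟩⟩
  have h1 := h x hx
  rw [Metric.mem_ball, Real.dist_eq] at hu
  simp only [sub_mulVec, smul_mulVec, dotProduct_sub, dotProduct_smul, smul_eq_mul] at h1 ⊢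
  have h2 : |(u - t) * (x ⬝ᵥ B *ᵥ x)| ≤ c / 2 * (x ⬝ᵥ x) := by
    rw [abs_mul]
    exact mul_le_mul hu.le (hB x) (abs_nonneg _) (by positivity)
  have := (abs_le.mp h2).2
  linarith

lemma quad_bound {A : Matrix (Fin 5) (Fin 5) ℝ} (hA : A.IsHermitian) :
    ∃ C : ℝ, ∀ x : Fin 5 → ℝ, -C * (x ⬝ᵥ x) ≤ x ⬝ᵥ A *ᵥ x := by
  obtain ⟨P, hP⟩ := spec hA
  refine ⟨∑ i, |hA.eigenvalues i|, fun x => ?_⟩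
  rw [(hP x).1, (hP x).2, Finset.mul_sum]
  refine Finset.sum_le_sum fun i _ => mul_le_mul_of_nonneg_right ?_ (sq_nonneg _)
  have := Finset.single_le_sum (f := fun i => |hA.eigenvalues i|) (fun i _ => abs_nonneg _)
    (Finset.mem_univ i)
  have h2 := neg_abs_le (hA.eigenvalues i)
  linarith

lemma core (A : Matrix (Fin 5) (Fin 5) ℝ) (hA : A.IsHermitian) (t₀ : ℝ)
    (h : ∀ t < t₀, (A - t • Jmat).det ≠ 0) : ¬ PosSub 2 (-(A - t₀ • Jmat)) := by
  intro hbad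
  have oV : IsOpen {t : ℝ | PosSub 4 (A - t • Jmat)} := posSub_open 4 A Jmat J_bound
  have oU : IsOpen {t : ℝ | PosSub 2 (-(A - t • Jmat))} := by
    have := posSub_open 2 (-A) (-Jmat) (fun x => by
      rw [neg_mulVec, dotProduct_neg, abs_neg]; exact J_bound x)
    convert this using 4
    simp [sub_eq_add_neg, add_comm]
  have hcov : Set.Iio t₀ ⊆ {t : ℝ | PosSub 4 (A - t • Jmat)} ∪
      {t : ℝ | PosSub 2 (-(A - t • Jmat))} := by
    intro t ht
    have hd := h t ht
    by_cases h2 : 2 ≤ negCount (pencilHerm A hA t)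
    · exact Or.inr ((posSub_of_neg (pencilHerm A hA t)).mono h2)
    · refine Or.inl ((posSub_of_pos (pencilHerm A hA t)).mono ?_)
      have hne : ∀ i, (pencilHerm A hA t).eigenvalues i ≠ 0 := by
        intro i hi
        apply hd
        rw [(pencilHerm A hA t).det_eq_prod_eigenvalues]
        exact Finset.prod_eq_zero (Finset.mem_univ i) (by simp [hi])
      have hcard := Finset.card_filter_add_card_filter_not (s := (Finset.univ : Finset (Fin 5)))
        (fun i => (pencilHerm A hA t).eigenvalues i < 0)
      have he : (Finset.univ.filter fun i => ¬ (pencilHerm A hA t).eigenvalues i < 0) =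
          Finset.univ.filter fun i => 0 < (pencilHerm A hA t).eigenvalues i := by
        ext i
        have := hne i
        simp only [Finset.mem_filter, Finset.mem_univ, true_and, not_lt]
        exact ⟨fun h => lt_of_le_of_ne h this.symm, le_of_lt⟩
      rw [he] at hcard
      simp only [Finset.card_univ, Fintype.card_fin] at hcard
      unfold posCount
      unfold negCount at h2
      omega
  have hV : (Set.Iio t₀ ∩ {t : ℝ | PosSub 4 (A - t • Jmat)}).Nonempty := by
    obtain ⟨C, hC⟩ := quad_bound hA
    refine ⟨min (t₀ - 1) (-C - 1), ?_, ?_⟩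
    · exact lt_of_le_of_lt (min_le_left _ _) (sub_one_lt t₀)
    · obtain ⟨W, hW, hx⟩ := finrank_ge 1 (Finset.univ.erase 4)
      refine ⟨W, by simpa using hW, 1, one_pos, fun x hxW => ?_⟩
      have h4 := hx x hxW 4 (by simp)
      rw [one_mulVec] at h4
      simp only [sub_mulVec, smul_mulVec, dotProduct_sub, dotProduct_smul, smul_eq_mul, J_eq, h4]
      have hm := min_le_right (t₀ - 1) (-C - 1)
      have h1 : 0 ≤ x ⬝ᵥ x := Finset.sum_nonneg fun i _ => mul_self_nonneg _
      nlinarith [hC x, mul_le_mul_of_nonneg_right hm h1]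
  have hU : (Set.Iio t₀ ∩ {t : ℝ | PosSub 2 (-(A - t • Jmat))}).Nonempty := by
    have hc : t₀ ∈ closure (Set.Iio t₀) := by simp
    obtain ⟨u, hu1, hu2⟩ := mem_closure_iff.mp hc _ oU hbad
    exact ⟨u, hu2, hu1⟩
  obtain ⟨t, -, a, b⟩ := isPreconnected_Iio _ _ oV oU hcov hV hU
  exact posSub_disj a b

/-- for the smallest real root `t₀` of `det(A − tJ) = 0` the matrix `A − t₀J`
has at most one negative eigenvalue, and for the largest real root `t₁` the matrix `A − t₁J`
has at most one positive eigenvalue; in particular neither has signature `(0,+,+,−,−)`. -/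
theorem extreme_roots_signature
    (A : Matrix (Fin 5) (Fin 5) ℝ) (hA : A.IsHermitian) (t₀ t₁ : ℝ)
    (h₀ : (A - t₀ • Jmat).det = 0) (h₀min : ∀ t : ℝ, (A - t • Jmat).det = 0 → t₀ ≤ t)
    (h₁ : (A - t₁ • Jmat).det = 0) (h₁max : ∀ t : ℝ, (A - t • Jmat).det = 0 → t ≤ t₁) :
    negCount (pencilHerm A hA t₀) ≤ 1 ∧
    posCount (pencilHerm A hA t₁) ≤ 1 ∧
    ¬(posCount (pencilHerm A hA t₀) = 2 ∧ negCount (pencilHerm A hA t₀) = 2) ∧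
    ¬(posCount (pencilHerm A hA t₁) = 2 ∧ negCount (pencilHerm A hA t₁) = 2) := by
  have n0 : negCount (pencilHerm A hA t₀) ≤ 1 := by
    by_contra hn
    exact core A hA t₀ (fun t ht hd => absurd (h₀min t hd) (not_le.mpr ht))
      ((posSub_of_neg (pencilHerm A hA t₀)).mono (by omega))
  have p1 : posCount (pencilHerm A hA t₁) ≤ 1 := by
    by_contra hn
    have key : ∀ t : ℝ, -A - t • Jmat = -(A - (-t) • Jmat) := fun t => by
      rw [neg_smul]; abel
    refine core (-A) hA.neg (-t₁) (fun t ht hd => ?_) ?_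
    · rw [key, det_neg] at hd
      have hd' : (A - (-t) • Jmat).det = 0 := by simpa using hd
      have := h₁max _ hd'
      linarith
    · rw [key, neg_neg, neg_neg]
      exact (posSub_of_pos (pencilHerm A hA t₁)).mono (by omega)
  exact ⟨n0, p1, fun h => by omega, fun h => by omega⟩
end

section
/- Let A be a real symmetric 5×5 matrix and J = diag(1,1,1,1,−1). Then there exist at most three real numbers t such that det(A − tJ) = 0 and the symmetric matrix A − tJ has exactly two positive and exactly two negative eigenvalues (counted with multiplicity). (Hence a Darboux cyclide carries at most three paired families of circles.) -/
open Matrix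

lemma aux_symm {M : Matrix (Fin 5) (Fin 5) ℝ} (hM : M.IsHermitian) (x y : Fin 5 → ℝ) :
    x ⬝ᵥ M *ᵥ y = y ⬝ᵥ M *ᵥ x := by
  have h : Mᵀ = M := by
    have := hM.eq
    rwa [conjTranspose_eq_transpose_of_trivial] at this
  rw [dotProduct_mulVec, ← mulVec_transpose, h, dotProduct_comm]

lemma aux_spec {M : Matrix (Fin 5) (Fin 5) ℝ} (hM : M.IsHermitian) (x : Fin 5 → ℝ) :
    x ⬝ᵥ M *ᵥ x = ∑ i, hM.eigenvalues i * (x ⬝ᵥ (hM.eigenvectorBasis i).ofLp) ^ 2 := by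
  have h := hM.eigenvectorBasis.sum_inner_mul_inner (WithLp.toLp 2 x) (WithLp.toLp 2 (M *ᵥ x))
  simp only [EuclideanSpace.inner_eq_star_dotProduct, star_trivial] at h
  rw [dotProduct_comm, ← h]
  refine Finset.sum_congr rfl fun i _ => ?_
  have h2 := hM.mulVec_eigenvectorBasis i
  rw [dotProduct_comm (M *ᵥ x), aux_symm hM, h2, dotProduct_smul,
    dotProduct_comm _ x, smul_eq_mul]
  ring

lemma aux_ker {m n : ℕ} (h : m < n) (f : (Fin n → ℝ) →ₗ[ℝ] (Fin m → ℝ)) :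
    ∃ c, c ≠ 0 ∧ f c = 0 := by
  have : LinearMap.ker f ≠ ⊥ := LinearMap.ker_ne_bot_of_finrank_lt (by simpa using h)
  obtain ⟨c, hc, h0⟩ := (Submodule.ne_bot_iff _).1 this
  exact ⟨c, h0, hc⟩

lemma aux_comb {M : Matrix (Fin 5) (Fin 5) ℝ} (hM : M.IsHermitian) (S : Finset (Fin 5))
    (hS : S.card = 2) (u v w : Fin 5 → ℝ) (huv : u ⬝ᵥ M *ᵥ v = 0) (huw : u ⬝ᵥ M *ᵥ w = 0)
    (hvw : v ⬝ᵥ M *ᵥ w = 0) :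
    ∃ a b c : ℝ, ∃ d : Fin 5 → ℝ, (a ≠ 0 ∨ b ≠ 0 ∨ c ≠ 0) ∧
      (a ^ 2 * (u ⬝ᵥ M *ᵥ u) + b ^ 2 * (v ⬝ᵥ M *ᵥ v) + c ^ 2 * (w ⬝ᵥ M *ᵥ w)
        = ∑ i, hM.eigenvalues i * d i ^ 2) ∧ ∀ i ∈ S, d i = 0 := by
  obtain ⟨p, q, -, rfl⟩ := Finset.card_eq_two.1 hS
  let e := fun i => (hM.eigenvectorBasis i).ofLp
  let N : Matrix (Fin 2) (Fin 3) ℝ :=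
    !![u ⬝ᵥ e p, v ⬝ᵥ e p, w ⬝ᵥ e p; u ⬝ᵥ e q, v ⬝ᵥ e q, w ⬝ᵥ e q]
  obtain ⟨c, hc, h0⟩ := aux_ker (by norm_num) N.mulVecLin
  have hp := congrFun h0 0
  have hq := congrFun h0 1
  simp only [N, mulVecLin_apply, mulVec, dotProduct, Fin.sum_univ_three, of_apply, cons_val,
    Pi.zero_apply] at hp hq
  change u ⬝ᵥ e p * c 0 + v ⬝ᵥ e p * c 1 + w ⬝ᵥ e p * c 2 = 0 at hp
  change u ⬝ᵥ e q * c 0 + v ⬝ᵥ e q * c 1 + w ⬝ᵥ e q * c 2 = 0 at hq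
  let x := c 0 • u + c 1 • v + c 2 • w
  refine ⟨c 0, c 1, c 2, fun i => x ⬝ᵥ e i, ?_, ?_, ?_⟩
  · by_contra! h
    apply hc
    ext i
    fin_cases i <;> simp [h]
  · rw [← aux_spec hM x]
    have h1 := aux_symm hM u v
    have h2 := aux_symm hM u w
    have h3 := aux_symm hM v w
    simp only [x, mulVec_add, mulVec_smul, dotProduct_add, add_dotProduct, smul_dotProduct,
      dotProduct_smul, smul_eq_mul, ← h1, ← h2, ← h3, huv, huw, hvw]
    ring
  · intro i hi
    simp only [Finset.mem_insert, Finset.mem_singleton] at hi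
    simp only [x, add_dotProduct, smul_dotProduct, smul_eq_mul]
    rcases hi with rfl | rfl
    · linarith
    · linarith

lemma aux_sq {a b c p q r : ℝ} (h : a ≠ 0 ∨ b ≠ 0 ∨ c ≠ 0) (hp : 0 < p) (hq : 0 < q)
    (hr : 0 < r) : 0 < a ^ 2 * p + b ^ 2 * q + c ^ 2 * r := by
  rcases h with h | h | h <;> positivity

lemma aux_pos {M : Matrix (Fin 5) (Fin 5) ℝ} (hM : M.IsHermitian) (hc : posCount hM = 2)
    (u v w : Fin 5 → ℝ) (huv : u ⬝ᵥ M *ᵥ v = 0) (huw : u ⬝ᵥ M *ᵥ w = 0)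
    (hvw : v ⬝ᵥ M *ᵥ w = 0) (hu : 0 < u ⬝ᵥ M *ᵥ u) (hv : 0 < v ⬝ᵥ M *ᵥ v)
    (hw : 0 < w ⬝ᵥ M *ᵥ w) : False := by
  obtain ⟨a, b, c, d, h, he, hd⟩ := aux_comb hM _ hc u v w huv huw hvw
  have h1 := aux_sq h hu hv hw
  have : ∑ i, hM.eigenvalues i * d i ^ 2 ≤ 0 := by
    refine Finset.sum_nonpos fun i _ => ?_
    by_cases hi : 0 < hM.eigenvalues i
    · simp [hd i (by simpa using hi)]
    · exact mul_nonpos_of_nonpos_of_nonneg (not_lt.1 hi) (sq_nonneg _)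
  linarith

lemma aux_neg {M : Matrix (Fin 5) (Fin 5) ℝ} (hM : M.IsHermitian) (hc : negCount hM = 2)
    (u v w : Fin 5 → ℝ) (huv : u ⬝ᵥ M *ᵥ v = 0) (huw : u ⬝ᵥ M *ᵥ w = 0)
    (hvw : v ⬝ᵥ M *ᵥ w = 0) (hu : u ⬝ᵥ M *ᵥ u < 0) (hv : v ⬝ᵥ M *ᵥ v < 0)
    (hw : w ⬝ᵥ M *ᵥ w < 0) : False := by
  obtain ⟨a, b, c, d, h, he, hd⟩ := aux_comb hM _ hc u v w huv huw hvw
  have h1 := aux_sq h (neg_pos.2 hu) (neg_pos.2 hv) (neg_pos.2 hw)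
  have : 0 ≤ ∑ i, hM.eigenvalues i * d i ^ 2 := by
    refine Finset.sum_nonneg fun i _ => ?_
    by_cases hi : hM.eigenvalues i < 0
    · simp [hd i (by simpa using hi)]
    · exact mul_nonneg (not_lt.1 hi) (sq_nonneg _)
  linarith

lemma aux_J (x y : Fin 5 → ℝ) : x ⬝ᵥ Jmat *ᵥ y
    = x 0 * y 0 + x 1 * y 1 + x 2 * y 2 + x 3 * y 3 - x 4 * y 4 := by
  simp [Jmat, mulVec_diagonal, dotProduct, Fin.sum_univ_five]
  ring

lemma aux_J_pos (x : Fin 5 → ℝ) (hx : x ≠ 0) (h4 : x 4 = 0) : 0 < x ⬝ᵥ Jmat *ᵥ x := by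
  by_contra! h
  rw [aux_J, h4] at h
  apply hx
  have h0 : x 0 = 0 := by nlinarith [sq_nonneg (x 0), sq_nonneg (x 1), sq_nonneg (x 2), sq_nonneg (x 3)]
  have h1 : x 1 = 0 := by nlinarith [sq_nonneg (x 0), sq_nonneg (x 1), sq_nonneg (x 2), sq_nonneg (x 3)]
  have h2 : x 2 = 0 := by nlinarith [sq_nonneg (x 0), sq_nonneg (x 1), sq_nonneg (x 2), sq_nonneg (x 3)]
  have h3 : x 3 = 0 := by nlinarith [sq_nonneg (x 0), sq_nonneg (x 1), sq_nonneg (x 2), sq_nonneg (x 3)]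
  ext i
  fin_cases i <;> simp [h0, h1, h2, h3, h4]

lemma aux_form (A : Matrix (Fin 5) (Fin 5) ℝ) (t : ℝ) (x y : Fin 5 → ℝ) :
    x ⬝ᵥ (A - t • Jmat) *ᵥ y = x ⬝ᵥ A *ᵥ y - t * (x ⬝ᵥ Jmat *ᵥ y) := by
  simp [sub_mulVec, smul_mulVec, dotProduct_sub]

lemma aux_eig {A : Matrix (Fin 5) (Fin 5) ℝ} {t : ℝ} {v : Fin 5 → ℝ}
    (hv : (A - t • Jmat) *ᵥ v = 0) (x : Fin 5 → ℝ) :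
    x ⬝ᵥ A *ᵥ v = t * (x ⬝ᵥ Jmat *ᵥ v) := by
  have := aux_form A t x v
  rw [hv, dotProduct_zero] at this
  linarith

lemma aux_orth {A : Matrix (Fin 5) (Fin 5) ℝ} (hA : A.IsHermitian) {s t : ℝ} (hst : s ≠ t)
    {u v : Fin 5 → ℝ} (hu : (A - s • Jmat) *ᵥ u = 0) (hv : (A - t • Jmat) *ᵥ v = 0) :
    u ⬝ᵥ Jmat *ᵥ v = 0 := by
  have h1 := aux_eig hv u
  have h2 := aux_eig hu v
  rw [aux_symm hA, h1, aux_symm Jmat_isHermitian v u] at h2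
  have : (t - s) * (u ⬝ᵥ Jmat *ᵥ v) = 0 := by linarith
  rcases mul_eq_zero.1 this with h | h
  · exact absurd (by linarith) hst
  · exact h

lemma aux_three {A : Matrix (Fin 5) (Fin 5) ℝ} (hA : A.IsHermitian) {r s t : ℝ} (hrs : r < s)
    (hst : s < t) {u v w : Fin 5 → ℝ} (hu : (A - r • Jmat) *ᵥ u = 0)
    (hv : (A - s • Jmat) *ᵥ v = 0) (hw : (A - t • Jmat) *ᵥ w = 0)
    (qu : 0 < u ⬝ᵥ Jmat *ᵥ u) (qv : 0 < v ⬝ᵥ Jmat *ᵥ v) (qw : 0 < w ⬝ᵥ Jmat *ᵥ w)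
    (hp : posCount (pencilHerm A hA r) = 2) (hn : negCount (pencilHerm A hA t) = 2) : False := by
  let N : Matrix (Fin 4) (Fin 5) ℝ := Matrix.of ![Jmat *ᵥ u, Jmat *ᵥ v, Jmat *ᵥ w, ![0, 0, 0, 0, 1]]
  obtain ⟨x, hx, h0⟩ := aux_ker (by norm_num) N.mulVecLin
  have e0 : x ⬝ᵥ Jmat *ᵥ u = 0 := by rw [dotProduct_comm]; exact congrFun h0 0
  have e1 : x ⬝ᵥ Jmat *ᵥ v = 0 := by rw [dotProduct_comm]; exact congrFun h0 1
  have e2 : x ⬝ᵥ Jmat *ᵥ w = 0 := by rw [dotProduct_comm]; exact congrFun h0 2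
  have e3 : x 4 = 0 := by
    have := congrFun h0 3
    simpa [N, mulVec, dotProduct, Fin.sum_univ_five] using this
  have qx := aux_J_pos x hx e3
  have ouv := aux_orth hA hrs.ne hu hv
  have ovw := aux_orth hA hst.ne hv hw
  have huv := aux_eig hv u
  have hvw := aux_eig hw v
  have huu := aux_eig hu u
  have hvv := aux_eig hv v
  have hww := aux_eig hw w
  have hxu := aux_eig hu x
  have hxv := aux_eig hv x
  have hxw := aux_eig hw x
  by_cases h : 0 < x ⬝ᵥ (A - r • Jmat) *ᵥ x
  · refine aux_pos _ hp x v w ?_ ?_ ?_ h ?_ ?_ <;> rw [aux_form]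
    · rw [hxv, e1]; ring
    · rw [hxw, e2]; ring
    · rw [hvw, ovw]; ring
    · rw [hvv]; nlinarith
    · rw [hww]; nlinarith
  · rw [aux_form] at h
    refine aux_neg _ hn x u v ?_ ?_ ?_ ?_ ?_ ?_ <;> rw [aux_form]
    · rw [hxu, e0]; ring
    · rw [hxv, e1]; ring
    · rw [huv, ouv]; ring
    · nlinarith
    · rw [huu]; nlinarith
    · rw [hvv]; nlinarith

lemma aux_two {A : Matrix (Fin 5) (Fin 5) ℝ} (hA : A.IsHermitian) {s t : ℝ} 
    {u v : Fin 5 → ℝ} (hu0 : u ≠ 0) (hv0 : v ≠ 0) (hu : (A - s • Jmat) *ᵥ u = 0)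
    (hv : (A - t • Jmat) *ᵥ v = 0)
    (qu : u ⬝ᵥ Jmat *ᵥ u ≤ 0) (qv : v ⬝ᵥ Jmat *ᵥ v ≤ 0) : s = t := by
  by_contra hst
  have o := aux_orth hA hst hu hv
  have o' := aux_orth hA (Ne.symm hst) hv hu
  have hu4 : u 4 ≠ 0 := fun h => absurd (aux_J_pos u hu0 h) (not_lt.2 qu)
  have hx : v 4 • u - u 4 • v = 0 := by
    by_contra hx
    have := aux_J_pos _ hx (by simp; ring)
    simp only [mulVec_sub, mulVec_smul, dotProduct_sub, sub_dotProduct, smul_dotProduct,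
      dotProduct_smul, smul_eq_mul, o, o'] at this
    nlinarith [mul_nonneg (sq_nonneg (v 4)) (neg_nonneg.2 qu),
      mul_nonneg (sq_nonneg (u 4)) (neg_nonneg.2 qv)]
  -- apply the pencil at `s`
  have h1 : (A - s • Jmat) *ᵥ v = 0 := by
    have h := congrArg ((A - s • Jmat) *ᵥ ·) hx
    simp only [mulVec_sub, mulVec_smul, hu, smul_zero, zero_sub, mulVec_zero, neg_eq_zero] at h
    exact (smul_eq_zero.1 h).resolve_left hu4
  let y : Fin 5 → ℝ := ![v 0, v 1, v 2, v 3, -v 4]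
  have h2 := aux_eig h1 y
  have h3 := aux_eig hv y
  have h4 : y ⬝ᵥ Jmat *ᵥ v = 0 := by
    have : (s - t) * (y ⬝ᵥ Jmat *ᵥ v) = 0 := by linarith
    exact (mul_eq_zero.1 this).resolve_left (sub_ne_zero.2 hst)
  apply hv0
  have h5 : v ⬝ᵥ v = 0 := by
    rw [← h4, aux_J]
    simp [y, dotProduct, Fin.sum_univ_five]
  exact dotProduct_self_eq_zero.1 h5

/-- there are at most three real parameters `t` for which `A − tJ` is singular
with exactly two positive and two negative eigenvalues (hence a Darboux cyclide carries at
most three paired families of circles). -/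
theorem at_most_three_paired_families
    (A : Matrix (Fin 5) (Fin 5) ℝ) (hA : A.IsHermitian) :
    {t : ℝ | (A - t • Jmat).det = 0 ∧
        posCount (pencilHerm A hA t) = 2 ∧
        negCount (pencilHerm A hA t) = 2}.encard ≤ 3 := by
  set P : Set ℝ := {t | (∃ v, (A - t • Jmat) *ᵥ v = 0 ∧ 0 < v ⬝ᵥ Jmat *ᵥ v) ∧
    posCount (pencilHerm A hA t) = 2 ∧ negCount (pencilHerm A hA t) = 2} with hP
  set N : Set ℝ := {t | ∃ v, v ≠ 0 ∧ (A - t • Jmat) *ᵥ v = 0 ∧ v ⬝ᵥ Jmat *ᵥ v ≤ 0} with hN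
  have hPc : P.encard ≤ 2 := by
    by_contra! h
    have h3 : 3 ≤ P.encard := Order.add_one_le_of_lt h
    obtain ⟨T, hT, hc⟩ := Set.exists_subset_encard_eq h3
    obtain ⟨x, y, z, hxy, hxz, hyz, rfl⟩ := Set.encard_eq_three.1 hc
    have key : ∀ r ∈ P, ∀ s ∈ P, ∀ t ∈ P, r < s → s < t → False := by
      rintro r ⟨⟨u, hu, qu⟩, hp, -⟩ s ⟨⟨v, hv, qv⟩, -⟩ t ⟨⟨w, hw, qw⟩, -, hn⟩ hrs hst
      exact aux_three hA hrs hst hu hv hw qu qv qw hp hn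
    have hx : x ∈ P := hT (by simp)
    have hy : y ∈ P := hT (by simp)
    have hz : z ∈ P := hT (by simp)
    rcases lt_or_gt_of_ne hxy with h1 | h1 <;> rcases lt_or_gt_of_ne hxz with h2 | h2 <;>
      rcases lt_or_gt_of_ne hyz with h3 | h3
    · exact key x hx y hy z hz h1 h3
    · exact key x hx z hz y hy h2 h3
    · linarith
    · exact key z hz x hx y hy h2 h1
    · exact key y hy x hx z hz h1 h2
    · linarith
    · exact key y hy z hz x hx h3 h2
    · exact key z hz y hy x hx h3 h1
  have hNc : N.encard ≤ 1 := by
    rw [Set.encard_le_one_iff]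
    rintro s t ⟨u, hu0, hu, qu⟩ ⟨v, hv0, hv, qv⟩
    exact aux_two hA hu0 hv0 hu hv qu qv
  calc _ ≤ (P ∪ N).encard := by
        apply Set.encard_le_encard
        rintro t ⟨hd, h⟩
        obtain ⟨v, hv0, hv⟩ := Matrix.exists_mulVec_eq_zero_iff.2 hd
        by_cases q : 0 < v ⬝ᵥ Jmat *ᵥ v
        · exact Or.inl ⟨⟨v, hv, q⟩, h⟩
        · exact Or.inr ⟨v, hv0, hv, not_lt.1 q⟩
    _ ≤ P.encard + N.encard := Set.encard_union_le _ _
    _ ≤ 2 + 1 := add_le_add hPc hNc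
    _ = 3 := by norm_num
end

section
/- Let R > r > 0 and define γ : ℝ → ℝ³ by γ(t) = (√(R²−r²)·cos t, r + R·sin t, r·cos t). Then for every t: (i) γ(t) lies on the ring torus, i.e. (√(γ₁(t)² + γ₂(t)²) − R)² + γ₃(t)² = r² (indeed √(γ₁(t)²+γ₂(t)²) = R + r·sin t > 0); (ii) |γ(t) − (0, r, 0)| = R; and (iii) γ(t) lies in the plane r·x₁ = √(R²−r²)·x₃ through the origin. Hence γ traces a circle of radius R (a Villarceau circle) lying entirely on the torus. -/
open Real

/-- the curve
`γ(t) = (√(R²−r²)·cos t, r + R·sin t, r·cos t)` lies on the ring torus with major radius `R`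
and minor radius `r`, has constant distance `R` from the point `(0,r,0)`, and lies in the
plane `r·x₁ = √(R²−r²)·x₃`; hence it is a circle of radius `R` (a Villarceau circle) lying
entirely on the torus. -/
theorem villarceau_circle_on_torus (R r : ℝ) (hr : 0 < r) (hR : r < R) (t : ℝ) :
    Real.sqrt ((Real.sqrt (R ^ 2 - r ^ 2) * Real.cos t) ^ 2 + (r + R * Real.sin t) ^ 2)
        = R + r * Real.sin t ∧
    0 < R + r * Real.sin t ∧
    (Real.sqrt ((Real.sqrt (R ^ 2 - r ^ 2) * Real.cos t) ^ 2 + (r + R * Real.sin t) ^ 2) - R) ^ 2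
        + (r * Real.cos t) ^ 2 = r ^ 2 ∧
    Real.sqrt ((Real.sqrt (R ^ 2 - r ^ 2) * Real.cos t - 0) ^ 2
        + ((r + R * Real.sin t) - r) ^ 2 + (r * Real.cos t - 0) ^ 2) = R ∧
    r * (Real.sqrt (R ^ 2 - r ^ 2) * Real.cos t) = Real.sqrt (R ^ 2 - r ^ 2) * (r * Real.cos t) := by
  have hq : Real.sqrt (R ^ 2 - r ^ 2) ^ 2 = R ^ 2 - r ^ 2 := Real.sq_sqrt (by nlinarith)
  have hc : Real.cos t ^ 2 = 1 - Real.sin t ^ 2 := by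
    linarith [Real.sin_sq_add_cos_sq t]
  have hpos : 0 < R + r * Real.sin t := by
    nlinarith [Real.neg_one_le_sin t]
  have h1 : Real.sqrt ((Real.sqrt (R ^ 2 - r ^ 2) * Real.cos t) ^ 2 + (r + R * Real.sin t) ^ 2)
      = R + r * Real.sin t := by
    rw [mul_pow, hq, hc]
    rw [show (R ^ 2 - r ^ 2) * (1 - Real.sin t ^ 2) + (r + R * Real.sin t) ^ 2
      = (R + r * Real.sin t) ^ 2 by ring]
    exact Real.sqrt_sq hpos.le
  refine ⟨h1, hpos, ?_, ?_, by ring⟩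
  · rw [h1, mul_pow, hc]
    ring
  · rw [sub_zero, sub_zero, mul_pow, hq, mul_pow r, hc]
    rw [show (R ^ 2 - r ^ 2) * (1 - Real.sin t ^ 2) + (r + R * Real.sin t - r) ^ 2
      + r ^ 2 * (1 - Real.sin t ^ 2) = R ^ 2 by ring]
    exact Real.sqrt_sq (by linarith)
end

section
/- Let R > r > 0 and γ(t) = (√(R²−r²)·cos t, r + R·sin t, r·cos t) be a Villarceau circle of the ring torus (√(x²+y²)−R)² + z² = r². For a point p = (p₁,p₂,p₃) let τ(p) = (−p₂, p₁, 0) be the tangent direction of the parallel circle (rotational path about the z-axis) through p. Then for every t: |γ′(t)| = R, |τ(γ(t))| = R + r·sin t, and γ′(t)·τ(γ(t)) = √(R²−r²)·(R + r·sin t). Consequently the cosine of the angle between the Villarceau circle and the parallel circle at γ(t) equals √(R²−r²)/R, independent of t: the Villarceau circles intersect the circular paths of the rotation under a constant angle. -/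
/-- along the Villarceau circle
`γ(t) = (√(R²−r²)·cos t, r + R·sin t, r·cos t)` of the ring torus, with
`τ(p) = (−p₂, p₁, 0)` the tangent direction of the parallel circle through `p`, one has
`|γ′(t)| = R`, `|τ(γ(t))| = R + r·sin t`, `γ′(t)·τ(γ(t)) = √(R²−r²)·(R + r·sin t)`, and
hence the cosine of the intersection angle is the constant `√(R²−r²)/R`. -/
theorem villarceau_constant_angle (R r : ℝ) (hr : 0 < r) (hR : r < R) (t : ℝ) :
    HasDerivAt (fun s => Real.sqrt (R ^ 2 - r ^ 2) * Real.cos s)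
      (-(Real.sqrt (R ^ 2 - r ^ 2)) * Real.sin t) t ∧
    HasDerivAt (fun s => r + R * Real.sin s) (R * Real.cos t) t ∧
    HasDerivAt (fun s => r * Real.cos s) (-r * Real.sin t) t ∧
    Real.sqrt ((-(Real.sqrt (R ^ 2 - r ^ 2)) * Real.sin t) ^ 2 + (R * Real.cos t) ^ 2
        + (-r * Real.sin t) ^ 2) = R ∧
    Real.sqrt ((-(r + R * Real.sin t)) ^ 2 + (Real.sqrt (R ^ 2 - r ^ 2) * Real.cos t) ^ 2
        + (0 : ℝ) ^ 2) = R + r * Real.sin t ∧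
    (-(Real.sqrt (R ^ 2 - r ^ 2)) * Real.sin t) * (-(r + R * Real.sin t))
        + (R * Real.cos t) * (Real.sqrt (R ^ 2 - r ^ 2) * Real.cos t)
        + (-r * Real.sin t) * 0
      = Real.sqrt (R ^ 2 - r ^ 2) * (R + r * Real.sin t) ∧
    ((-(Real.sqrt (R ^ 2 - r ^ 2)) * Real.sin t) * (-(r + R * Real.sin t))
        + (R * Real.cos t) * (Real.sqrt (R ^ 2 - r ^ 2) * Real.cos t)
        + (-r * Real.sin t) * 0)
      / (Real.sqrt ((-(Real.sqrt (R ^ 2 - r ^ 2)) * Real.sin t) ^ 2 + (R * Real.cos t) ^ 2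
            + (-r * Real.sin t) ^ 2)
          * Real.sqrt ((-(r + R * Real.sin t)) ^ 2
            + (Real.sqrt (R ^ 2 - r ^ 2) * Real.cos t) ^ 2 + (0 : ℝ) ^ 2))
      = Real.sqrt (R ^ 2 - r ^ 2) / R := by
  have hRpos : 0 < R := hr.trans hR
  have hq : Real.sqrt (R ^ 2 - r ^ 2) ^ 2 = R ^ 2 - r ^ 2 :=
    Real.sq_sqrt (by nlinarith)
  have hcs : Real.cos t ^ 2 = 1 - Real.sin t ^ 2 := Real.cos_sq' t
  have hpos : 0 < R + r * Real.sin t := by nlinarith [Real.neg_one_le_sin t]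
  generalize Real.sqrt (R ^ 2 - r ^ 2) = q at *
  have h4 : Real.sqrt ((-q * Real.sin t) ^ 2 + (R * Real.cos t) ^ 2
      + (-r * Real.sin t) ^ 2) = R := by
    rw [show (-q * Real.sin t) ^ 2 + (R * Real.cos t) ^ 2
      + (-r * Real.sin t) ^ 2 = R ^ 2 by
        linear_combination Real.sin t ^ 2 * hq + R ^ 2 * hcs]
    exact Real.sqrt_sq hRpos.le
  have h5 : Real.sqrt ((-(r + R * Real.sin t)) ^ 2 + (q * Real.cos t) ^ 2
      + (0 : ℝ) ^ 2) = R + r * Real.sin t := by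
    rw [show (-(r + R * Real.sin t)) ^ 2 + (q * Real.cos t) ^ 2
      + (0 : ℝ) ^ 2 = (R + r * Real.sin t) ^ 2 by
        linear_combination Real.cos t ^ 2 * hq + (R ^ 2 - r ^ 2) * hcs]
    exact Real.sqrt_sq hpos.le
  have h6 : (-q * Real.sin t) * (-(r + R * Real.sin t))
        + (R * Real.cos t) * (q * Real.cos t) + (-r * Real.sin t) * 0
      = q * (R + r * Real.sin t) := by
    linear_combination R * q * hcs
  refine ⟨?_, ?_, ?_, h4, h5, h6, ?_⟩
  · simpa using (Real.hasDerivAt_cos t).const_mul q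
  · exact ((Real.hasDerivAt_sin t).const_mul R).const_add r
  · simpa using (Real.hasDerivAt_cos t).const_mul r
  · rw [h4, h5, h6]
    exact mul_div_mul_right _ _ hpos.ne'
end
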